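/- Let p = p₂₁·z·u² and p′ = p′₂₁·z·u² with p₂₁, p′₂₁ ∈ ℂ. Then E_p ≅ E_{p′} if and only if there exists λ ∈ ℂ, λ ≠ 0, with p′₂₁ = λ·p₂₁. -/

import Mathlib

set_option synthInstance.maxHeartbeats 1000000
set_option maxHeartbeats 1000000

noncomputable section

/-- The ring of Laurent polynomials `ℂ[z,z⁻¹]`. -/
abbrev Lz : Type := LaurentPolynomial ℂ

/-- The ring `P = ℂ[z,z⁻¹][[u]]` of formal power series in `u` with Laurent
polynomial coefficients. -/
abbrev Pz : Type := PowerSeries Lz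

/-- The monomial `z^l u^i` as an element of `P`. -/
def mon (l : ℤ) (i : ℕ) : Pz := PowerSeries.monomial i (LaurentPolynomial.T l)

/-- The ideal `(u^{n+1})` of `P`. -/
def In (n : ℕ) : Ideal Pz := Ideal.span {(PowerSeries.X : Pz) ^ (n + 1)}

/-- The ring `A = ℂ[z,z⁻¹][u]/(u^{n+1})`, the coordinate ring of the overlap of the two
standard charts of the `n`-th infinitesimal neighborhood `Z_k^{(n)}`. -/
abbrev Aq (n : ℕ) : Type := Pz ⧸ In n

/-- The quotient map `P → A`. -/
def toA (n : ℕ) : Pz →+* Aq n := Ideal.Quotient.mk (In n)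

/-- The monomial `z^l u^i` as an element of `A`. -/
def monA (n : ℕ) (l : ℤ) (i : ℕ) : Aq n := toA n (mon l i)

/-- `O_U ⊆ A`: the `ℂ`-span of the monomials `z^l u^i` with `l ≥ 0`, `0 ≤ i ≤ n`. -/
def OU (n : ℕ) : Submodule ℂ (Aq n) :=
  Submodule.span ℂ {x | ∃ l : ℤ, ∃ i : ℕ, 0 ≤ l ∧ i ≤ n ∧ x = monA n l i}

/-- `O_V ⊆ A`: the `ℂ`-span of the monomials `z^l u^i` with `l ≤ k·i`, `0 ≤ i ≤ n`. -/
def OV (k n : ℕ) : Submodule ℂ (Aq n) :=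
  Submodule.span ℂ {x | ∃ l : ℤ, ∃ i : ℕ, l ≤ k * i ∧ i ≤ n ∧ x = monA n l i}

/-- The submodule `a·S` obtained from a submodule `S` by multiplying by a fixed element `a`. -/
def msmul {n : ℕ} (a : Aq n) (S : Submodule ℂ (Aq n)) : Submodule ℂ (Aq n) :=
  Submodule.map (LinearMap.mulLeft ℂ a) S

/-- The transition matrix `M_p = ((z^j, p),(0, z^{−j}))` of the bundle `E_p`. -/
def Mmat (n : ℕ) (j : ℤ) (p : Aq n) : Matrix (Fin 2) (Fin 2) (Aq n) :=
  !![monA n j 0, p; 0, monA n (-j) 0]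

/-- `E_p ≅ E_{p′}`: there are matrices `A₁` with entries in `O_U` and `B₁` with entries
in `O_V`, with `det A₁` a unit of `O_U` and `det B₁` a unit of `O_V`, with
`B₁ · M_p = M_{p′} · A₁`. -/
def BundleIso (k n : ℕ) (j : ℤ) (p p' : Aq n) : Prop :=
  ∃ A₁ B₁ : Matrix (Fin 2) (Fin 2) (Aq n),
    (∀ a b : Fin 2, A₁ a b ∈ OU n) ∧ (∀ a b : Fin 2, B₁ a b ∈ OV k n) ∧
    (∃ w ∈ OU n, A₁.det * w = 1) ∧ (∃ w ∈ OV k n, B₁.det * w = 1) ∧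
    B₁ * Mmat n j p = Mmat n j p' * A₁

/-!
The `u^0`-coefficient of an isomorphism is an automorphism of the restriction `O(-j) ⊕ O(j)` to the
zero section. One off-diagonal entry is a section of `O(-2j)`, hence vanishes, so the diagonal
entries are units; being global functions on `ℙ¹` they are nonzero constants `s` and `t`. The
`u^m`-coefficient of the upper right entry of `B₁ · M_p = M_{p'} · A₁`, for `p = f u^m` and
`p' = f' u^m`, then reads `s f = t f'` up to a Čech coboundary, which only involves the `z^l` with
`l ≤ km - j` or `l ≥ j`.
-/

open LaurentPolynomial (C T)

lemma coeff_T_mul {R : Type*} [Semiring R] (f : LaurentPolynomial R) (m l : ℤ) :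
    (T m * f).coeff l = f.coeff (l - m) := by
  rw [T, AddMonoidAlgebra.coeff_single_mul_apply, one_mul, neg_add_eq_sub]

section UCoeff

variable {n : ℕ}

lemma toA_surjective : Function.Surjective (toA n) :=
  Ideal.Quotient.mk_surjective

lemma In_restrictScalars_le_ker_coeff (i : Fin (n + 1)) :
    (In n).restrictScalars Lz ≤ LinearMap.ker (PowerSeries.coeff (R := Lz) i) := by
  intro g hg
  rw [Submodule.restrictScalars_mem, In, Ideal.mem_span_singleton,
    PowerSeries.X_pow_dvd_iff] at hg
  exact hg i i.isLt

/-- The coefficient of `u^i`, a Laurent polynomial in `z`, of an element of `A`. The index lies in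
`Fin (n + 1)` because higher coefficients are not well defined modulo `u^{n+1}`. -/
def uCoeff (i : Fin (n + 1)) : Aq n →ₗ[Lz] Lz :=
  ((In n).restrictScalars Lz).liftQ (PowerSeries.coeff i) (In_restrictScalars_le_ker_coeff i) ∘ₗ
    (Submodule.Quotient.restrictScalarsEquiv Lz (In n)).symm.toLinearMap

@[simp]
lemma uCoeff_toA (i : Fin (n + 1)) (g : Pz) : uCoeff i (toA n g) = PowerSeries.coeff i g :=
  rfl

lemma uCoeff_smul (i : Fin (n + 1)) (c : ℂ) (x : Aq n) : uCoeff i (c • x) = c • uCoeff i x :=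
  (uCoeff i).map_smul_of_tower c x

lemma uCoeff_zero_mul (x y : Aq n) : uCoeff 0 (x * y) = uCoeff 0 x * uCoeff 0 y := by
  obtain ⟨g, rfl⟩ := toA_surjective x
  obtain ⟨h, rfl⟩ := toA_surjective y
  simp only [← map_mul, uCoeff_toA, Fin.val_zero, PowerSeries.coeff_zero_eq_constantCoeff_apply]

lemma uCoeff_zero_one : uCoeff 0 (1 : Aq n) = 1 := by
  rw [← map_one (toA n), uCoeff_toA, Fin.val_zero, PowerSeries.coeff_zero_one]

lemma uCoeff_monA (i : Fin (n + 1)) (l : ℤ) (m : ℕ) :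
    uCoeff i (monA n l m) = if (i : ℕ) = m then T l else 0 := by
  rw [monA, uCoeff_toA, mon, PowerSeries.coeff_monomial]

lemma uCoeff_mul_smul_monA (m : Fin (n + 1)) (x : Aq n) (f : Lz) :
    uCoeff m (x * f • monA n 0 m) = uCoeff 0 x * f := by
  obtain ⟨g, rfl⟩ := toA_surjective x
  have hX : mon 0 m = PowerSeries.X ^ (m : ℕ) := by
    rw [mon, LaurentPolynomial.T_zero, PowerSeries.X_pow_eq]
  have hg : PowerSeries.coeff m (g * PowerSeries.X ^ (m : ℕ)) = PowerSeries.coeff 0 g := by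
    simpa only [zero_add] using PowerSeries.coeff_mul_X_pow g m 0
  rw [mul_smul_comm, map_smul, monA, ← map_mul, uCoeff_toA, uCoeff_toA, hX, hg, smul_eq_mul,
    mul_comm, Fin.val_zero]

lemma T_smul_monA (l : ℤ) (m : ℕ) : (T l : Lz) • monA n 0 m = monA n l m := by
  change toA n ((T l : Lz) • mon 0 m) = toA n (mon l m)
  rw [mon, mon, ← map_smul, smul_eq_mul, LaurentPolynomial.T_zero, mul_one]

lemma monA_zero_zero : monA n 0 0 = 1 := by
  rw [monA, mon, LaurentPolynomial.T_zero, PowerSeries.monomial_zero_eq_C_apply, map_one, map_one]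

lemma monA_zero_eq_smul_one (l : ℤ) : monA n l 0 = (T l : Lz) • (1 : Aq n) := by
  rw [← T_smul_monA, monA_zero_zero]

end UCoeff

section Charts

variable {k n : ℕ}

lemma coeff_uCoeff_eq_zero_of_mem_span {P : ℤ → ℕ → Prop} {x : Aq n}
    (hx : x ∈ Submodule.span ℂ {x | ∃ l : ℤ, ∃ i : ℕ, P l i ∧ i ≤ n ∧ x = monA n l i})
    {i : Fin (n + 1)} {l : ℤ} (hl : ¬P l i) : (uCoeff i x).coeff l = 0 := by
  induction hx using Submodule.span_induction with
  | mem x h =>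
    obtain ⟨l', i', hP, -, rfl⟩ := h
    rw [uCoeff_monA]
    split_ifs with hi
    · subst hi
      rw [LaurentPolynomial.T_apply, if_neg]
      rintro rfl
      exact hl hP
    · rfl
  | zero => rw [map_zero]; rfl
  | add x y _ _ hx hy =>
    rw [map_add, AddMonoidAlgebra.coeff_add, Finsupp.add_apply, hx, hy, add_zero]
  | smul c x _ hx =>
    rw [uCoeff_smul, AddMonoidAlgebra.coeff_smul, Finsupp.smul_apply, hx, smul_zero]

lemma coeff_uCoeff_eq_zero_of_mem_OU {x : Aq n} (hx : x ∈ OU n) (i : Fin (n + 1)) {l : ℤ}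
    (hl : l < 0) : (uCoeff i x).coeff l = 0 :=
  coeff_uCoeff_eq_zero_of_mem_span (P := fun l _ => 0 ≤ l) hx hl.not_ge

lemma coeff_uCoeff_eq_zero_of_mem_OV {x : Aq n} (hx : x ∈ OV k n) (i : Fin (n + 1)) {l : ℤ}
    (hl : k * (i : ℕ) < l) : (uCoeff i x).coeff l = 0 :=
  coeff_uCoeff_eq_zero_of_mem_span (P := fun l i => l ≤ k * i) hx hl.not_ge

lemma algebraMap_mem_OU (c : ℂ) : algebraMap ℂ (Aq n) c ∈ OU n := by
  rw [Algebra.algebraMap_eq_smul_one, ← monA_zero_zero]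
  exact Submodule.smul_mem _ _ (Submodule.subset_span ⟨0, 0, le_rfl, n.zero_le, rfl⟩)

lemma algebraMap_mem_OV (c : ℂ) : algebraMap ℂ (Aq n) c ∈ OV k n := by
  rw [Algebra.algebraMap_eq_smul_one, ← monA_zero_zero]
  exact Submodule.smul_mem _ _ (Submodule.subset_span ⟨0, 0, by simp, n.zero_le, rfl⟩)

lemma exists_uCoeff_zero_eq_C {x y : Aq n} (hx : x ∈ OU n) (hy : y ∈ OV k n)
    (hxy : uCoeff 0 x = uCoeff 0 y) : ∃ c : ℂ, uCoeff 0 x = C c := by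
  refine ⟨(uCoeff 0 x).coeff 0, LaurentPolynomial.ext fun l => ?_⟩
  rw [LaurentPolynomial.C_apply]
  rcases lt_trichotomy l 0 with hl | rfl | hl
  · rw [coeff_uCoeff_eq_zero_of_mem_OU hx 0 hl, if_neg hl.ne]
  · rw [if_pos rfl]
  · rw [hxy, coeff_uCoeff_eq_zero_of_mem_OV hy 0 (by simpa using hl), if_neg hl.ne']

lemma uCoeff_zero_eq_zero_of_T_mul_eq {x y : Aq n} {j : ℤ} (hj : 0 < j) (hx : x ∈ OU n)
    (hy : y ∈ OV k n) (hxy : T (-j) * uCoeff 0 y = T j * uCoeff 0 x) : uCoeff 0 x = 0 := by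
  refine LaurentPolynomial.ext fun l => ?_
  rcases lt_or_ge l 0 with hl | hl
  · exact coeff_uCoeff_eq_zero_of_mem_OU hx 0 hl
  · have hlj := congrArg (fun g : Lz => g.coeff (l + j)) hxy
    simp only [coeff_T_mul, add_sub_cancel_right] at hlj
    rw [← hlj, coeff_uCoeff_eq_zero_of_mem_OV hy 0 (by simpa using by lia)]
    rfl

end Charts

section BundleIso

variable {k n : ℕ} {j : ℤ}

lemma mul_Mmat_eq_Mmat_mul {p p' : Aq n} {A B : Matrix (Fin 2) (Fin 2) (Aq n)}
    (h : B * Mmat n j p = Mmat n j p' * A) :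
    (T j : Lz) • B 0 0 = (T j : Lz) • A 0 0 + p' * A 1 0 ∧
    B 0 0 * p + (T (-j) : Lz) • B 0 1 = (T j : Lz) • A 0 1 + p' * A 1 1 ∧
    B 1 0 * p + (T (-j) : Lz) • B 1 1 = (T (-j) : Lz) • A 1 1 := by
  refine ⟨?_, ?_, ?_⟩
  · simpa [Matrix.mul_apply, Mmat, monA_zero_eq_smul_one] using congrFun₂ h 0 0
  · simpa [Matrix.mul_apply, Mmat, monA_zero_eq_smul_one] using congrFun₂ h 0 1
  · simpa [Matrix.mul_apply, Mmat, monA_zero_eq_smul_one] using congrFun₂ h 1 1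

lemma exists_uCoeff_zero_diagonal_eq_C {p p' : Aq n} (hj : 0 < j) (hp : uCoeff 0 p = 0)
    (hp' : uCoeff 0 p' = 0) {A B : Matrix (Fin 2) (Fin 2) (Aq n)} (hA : ∀ a b, A a b ∈ OU n)
    (hB : ∀ a b, B a b ∈ OV k n) (hdet : IsUnit A.det)
    (hAB : B * Mmat n j p = Mmat n j p' * A) :
    ∃ s t : ℂ, s ≠ 0 ∧ t ≠ 0 ∧ uCoeff 0 (B 0 0) = C s ∧ uCoeff 0 (A 1 1) = C t := by
  obtain ⟨h00, h01, h11⟩ := mul_Mmat_eq_Mmat_mul hAB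
  replace h00 := congrArg (uCoeff 0) h00
  replace h01 := congrArg (uCoeff 0) h01
  replace h11 := congrArg (uCoeff 0) h11
  simp only [map_add, map_smul, uCoeff_zero_mul, hp, hp', mul_zero, zero_mul, zero_add, add_zero,
    smul_eq_mul] at h00 h01 h11
  have hBA00 := (LaurentPolynomial.isUnit_T j).mul_left_cancel h00
  have hBA11 := (LaurentPolynomial.isUnit_T (-j)).mul_left_cancel h11
  have hA01 : uCoeff 0 (A 0 1) = 0 := uCoeff_zero_eq_zero_of_T_mul_eq hj (hA 0 1) (hB 0 1) h01
  obtain ⟨s, hs⟩ := exists_uCoeff_zero_eq_C (hA 0 0) (hB 0 0) hBA00.symm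
  obtain ⟨t, ht⟩ := exists_uCoeff_zero_eq_C (hA 1 1) (hB 1 1) hBA11.symm
  obtain ⟨w, hw⟩ := hdet.exists_right_inv
  have hst : C s * C t * uCoeff 0 w = 1 := by
    rw [← uCoeff_zero_one (n := n), ← hw, Matrix.det_fin_two, uCoeff_zero_mul, map_sub,
      uCoeff_zero_mul, uCoeff_zero_mul, hs, ht, hA01, zero_mul, sub_zero]
  refine ⟨s, t, ?_, ?_, hBA00.trans hs, ht⟩ <;> rintro rfl <;> simp at hst

theorem BundleIso.exists_mul_coeff_eq_mul_coeff {f f' : Lz} (hj : 0 < j) {m : Fin (n + 1)}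
    (hm : m ≠ 0) (h : BundleIso k n j (f • monA n 0 m) (f' • monA n 0 m)) :
    ∃ s t : ℂ, s ≠ 0 ∧ t ≠ 0 ∧
      ∀ l ∈ Finset.Ioo (k * (m : ℕ) - j) j, s * f.coeff l = t * f'.coeff l := by
  obtain ⟨A, B, hA, hB, ⟨w, -, hw⟩, -, hAB⟩ := h
  have hp (g : Lz) : uCoeff 0 (g • monA n 0 m) = 0 := by
    rw [map_smul, uCoeff_monA, if_neg (by simpa [eq_comm] using hm), smul_zero]
  obtain ⟨s, t, hs0, ht0, hs, ht⟩ := exists_uCoeff_zero_diagonal_eq_C hj (hp f) (hp f') hA hB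
    (.of_mul_eq_one w hw) hAB
  refine ⟨s, t, hs0, ht0, fun l hl => ?_⟩
  rw [Finset.mem_Ioo] at hl
  have h01 : s • f + T (-j) * uCoeff m (B 0 1) = T j * uCoeff m (A 0 1) + t • f' := by
    have h01 := congrArg (uCoeff m) (mul_Mmat_eq_Mmat_mul hAB).2.1
    rwa [mul_comm _ (A 1 1), map_add, map_add, uCoeff_mul_smul_monA, uCoeff_mul_smul_monA,
      map_smul, map_smul, hs, ht, ← LaurentPolynomial.smul_eq_C_mul,
      ← LaurentPolynomial.smul_eq_C_mul] at h01
  have hB01 : (T (-j) * uCoeff m (B 0 1)).coeff l = 0 := by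
    rw [coeff_T_mul, coeff_uCoeff_eq_zero_of_mem_OV (hB 0 1) m (by lia)]
  have hA01 : (T j * uCoeff m (A 0 1)).coeff l = 0 := by
    rw [coeff_T_mul, coeff_uCoeff_eq_zero_of_mem_OU (hA 0 1) m (by lia)]
  simpa only [AddMonoidAlgebra.coeff_add, AddMonoidAlgebra.coeff_smul, Finsupp.add_apply,
    Finsupp.smul_apply, hB01, hA01, add_zero, zero_add, smul_eq_mul] using
    congrArg (fun g : Lz => g.coeff l) h01

theorem bundleIso_smul_right (p : Aq n) {lam : ℂ} (hlam : lam ≠ 0) :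
    BundleIso k n j p (lam • p) := by
  have hdet : (Matrix.diagonal ![algebraMap ℂ (Aq n) lam, algebraMap ℂ (Aq n) 1]).det *
      algebraMap ℂ (Aq n) lam⁻¹ = 1 := by
    simp [← map_mul, hlam]
  refine ⟨_, _, fun a b => ?_, fun a b => ?_, ⟨_, algebraMap_mem_OU _, hdet⟩,
    ⟨_, algebraMap_mem_OV _, hdet⟩, ?_⟩
  · fin_cases a <;> fin_cases b <;> simp [algebraMap_mem_OU, -map_one, -map_inv₀]
  · fin_cases a <;> fin_cases b <;> simp [algebraMap_mem_OV, -map_one]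
  · have hsmul : lam • p = algebraMap ℂ (Aq n) lam * p := Algebra.smul_def lam p
    rw [hsmul]
    ext a b
    fin_cases a <;> fin_cases b <;> simp [Mmat, mul_comm]

end BundleIso

theorem statement13_general {k n : ℕ} {j : ℤ} (hj : 0 < j) {m : Fin (n + 1)} (hm : m ≠ 0)
    {f f' : Lz} (hf : f.coeff.support ⊆ Finset.Ioo (k * (m : ℕ) - j) j)
    (hf' : f'.coeff.support ⊆ Finset.Ioo (k * (m : ℕ) - j) j) :
    BundleIso k n j (f • monA n 0 m) (f' • monA n 0 m) ↔ ∃ lam : ℂ, lam ≠ 0 ∧ f' = lam • f := by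
  constructor
  · intro h
    obtain ⟨s, t, hs, ht, hst⟩ := h.exists_mul_coeff_eq_mul_coeff hj hm
    refine ⟨s / t, div_ne_zero hs ht, LaurentPolynomial.ext fun l => ?_⟩
    rw [AddMonoidAlgebra.coeff_smul, Finsupp.smul_apply, smul_eq_mul]
    by_cases hl : l ∈ Finset.Ioo (k * (m : ℕ) - j) j
    · rw [div_mul_eq_mul_div, hst l hl, mul_div_cancel_left₀ _ ht]
    · rw [Finsupp.notMem_support_iff.mp (mt (@hf l) hl),
        Finsupp.notMem_support_iff.mp (mt (@hf' l) hl), mul_zero]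
  · rintro ⟨lam, hlam, rfl⟩
    rw [smul_assoc]
    exact bundleIso_smul_right _ hlam

theorem bundleIso_smul_monA_iff {k n : ℕ} {j l : ℤ} {m : Fin (n + 1)} (hm : m ≠ 0)
    (hl : l ∈ Finset.Ioo (k * (m : ℕ) - j) j) {c c' : ℂ} :
    BundleIso k n j (c • monA n l m) (c' • monA n l m) ↔ ∃ lam : ℂ, lam ≠ 0 ∧ c' = lam * c := by
  have hj : 0 < j := by
    have hkm : (0 : ℤ) ≤ k * (m : ℕ) := by positivity
    linarith only [(Finset.mem_Ioo.mp hl).1, (Finset.mem_Ioo.mp hl).2, hkm]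
  have hsupp (a : ℂ) : (a • T l : Lz).coeff.support ⊆ Finset.Ioo (k * (m : ℕ) - j) j := by
    rw [LaurentPolynomial.smul_eq_C_mul]
    exact (LaurentPolynomial.support_C_mul_T a l).trans (Finset.singleton_subset_iff.mpr hl)
  have hT := smul_left_injective ℂ (LaurentPolynomial.isUnit_T (R := ℂ) l).ne_zero
  simpa only [smul_assoc, T_smul_monA, smul_smul, hT.eq_iff] using
    statement13_general hj hm (hsupp c) (hsupp c')

/-- on `Z_1^{(2)}` (`k = 1`, `j = 2`, `n = 2`), for `p = p₂₁ z u²` and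
`p′ = p′₂₁ z u²`: `E_p ≅ E_{p′}` iff there is `λ ≠ 0` with `p′₂₁ = λ p₂₁`. -/
theorem statement13 (p21 q21 : ℂ) :
    BundleIso 1 2 2 (p21 • monA 2 1 2) (q21 • monA 2 1 2) ↔
    ∃ lam : ℂ, lam ≠ 0 ∧ q21 = lam * p21 :=
  bundleIso_smul_monA_iff (m := 2) (by decide) (by decide)
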